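/- A channel Λ on the bipartite system A × B is A↛B semicausal if and only if it is semilocalizable with communication from B to A: there exist a finite nonempty ancilla type C, a unit vector |0_C⟩ ∈ ℂ^C, a unitary U_{BC} acting on the B and C tensor factors, and a unitary U_{AC} acting on the A and C tensor factors, such that for every matrix ρ on A × B, Λ[ρ] = Tr_C[ U_{AC} U_{BC} (ρ ⊗ |0_C⟩⟨0_C|) U_{BC}† U_{AC}† ]. -/

import Mathlib

open Matrix BigOperators
open scoped Kronecker ComplexOrder

noncomputable section

/-- Partial trace over the `A` factor. -/
def trA {A B : Type*} [Fintype A] (ρ : Matrix (A × B) (A × B) ℂ) : Matrix B B ℂ :=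
  Matrix.of fun b b' => ∑ a, ρ (a, b) (a, b')

/-- Partial trace over the `B` factor. -/
def trB {A B : Type*} [Fintype B] (ρ : Matrix (A × B) (A × B) ℂ) : Matrix A A ℂ :=
  Matrix.of fun a a' => ∑ b, ρ (a, b) (a', b)

/-- A state: positive semidefinite matrix of trace 1. -/
def IsState {n : Type*} [Fintype n] (ρ : Matrix n n ℂ) : Prop :=
  ρ.PosSemidef ∧ ρ.trace = 1

/-- A channel: a map admitting a Kraus representation `Λ[X] = ∑ i, K i * X * (K i)ᴴ`
with `∑ i, (K i)ᴴ * K i = 1` (completely positive and trace-preserving). -/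
def IsChannel {n : Type*} [Fintype n] [DecidableEq n]
    (Λ : Matrix n n ℂ → Matrix n n ℂ) : Prop :=
  ∃ (m : ℕ) (K : Fin m → Matrix n n ℂ),
    (∀ X, Λ X = ∑ i, K i * X * (K i)ᴴ) ∧ (∑ i, (K i)ᴴ * K i = 1)

/-- The induced map `Γ ⊗ id` on the bipartite system, acting blockwise. -/
def tensIdA {A B : Type*} (Γ : Matrix A A ℂ → Matrix A A ℂ)
    (ρ : Matrix (A × B) (A × B) ℂ) : Matrix (A × B) (A × B) ℂ :=
  Matrix.of fun p q => Γ (Matrix.of fun a a' => ρ (a, p.2) (a', q.2)) p.1 q.1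

/-- The induced map `id ⊗ Γ` on the bipartite system, acting blockwise. -/
def tensIdB {A B : Type*} (Γ : Matrix B B ℂ → Matrix B B ℂ)
    (ρ : Matrix (A × B) (A × B) ℂ) : Matrix (A × B) (A × B) ℂ :=
  Matrix.of fun p q => Γ (Matrix.of fun b b' => ρ (p.1, b) (q.1, b')) p.2 q.2

/-- `Λ` is A↛B semicausal: no channel applied by Alice beforehand affects Bob's
reduced output state. -/
def SemicausalAtoB {A B : Type*} [Fintype A] [Fintype B] [DecidableEq A]
    (Λ : Matrix (A × B) (A × B) ℂ → Matrix (A × B) (A × B) ℂ) : Prop :=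
  ∀ ρ : Matrix (A × B) (A × B) ℂ, IsState ρ →
    ∀ Γ : Matrix A A ℂ → Matrix A A ℂ, IsChannel Γ →
      trA (Λ (tensIdA Γ ρ)) = trA (Λ ρ)

/-- `Λ` is A↚B semicausal: no channel applied by Bob beforehand affects Alice's
reduced output state. -/
def SemicausalBtoA {A B : Type*} [Fintype A] [Fintype B] [DecidableEq B]
    (Λ : Matrix (A × B) (A × B) ℂ → Matrix (A × B) (A × B) ℂ) : Prop :=
  ∀ ρ : Matrix (A × B) (A × B) ℂ, IsState ρ →
    ∀ Γ : Matrix B B ℂ → Matrix B B ℂ, IsChannel Γ →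
      trB (Λ (tensIdB Γ ρ)) = trB (Λ ρ)

/-- `Λ` is causal: both A↛B and A↚B semicausal. -/
def Causal {A B : Type*} [Fintype A] [Fintype B] [DecidableEq A] [DecidableEq B]
    (Λ : Matrix (A × B) (A × B) ℂ → Matrix (A × B) (A × B) ℂ) : Prop :=
  SemicausalAtoB Λ ∧ SemicausalBtoA Λ

/-- A unitary on the `B` and `C` factors, tensored with the identity on `A`. -/
def liftBC {A B : Type*} {c : ℕ} [DecidableEq A]
    (W : Matrix (B × Fin c) (B × Fin c) ℂ) :
    Matrix ((A × B) × Fin c) ((A × B) × Fin c) ℂ :=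
  Matrix.of fun p q =>
    (if p.1.1 = q.1.1 then (1 : ℂ) else 0) * W (p.1.2, p.2) (q.1.2, q.2)

/-- A unitary on the `A` and `C` factors, tensored with the identity on `B`. -/
def liftAC {A B : Type*} {c : ℕ} [DecidableEq B]
    (V : Matrix (A × Fin c) (A × Fin c) ℂ) :
    Matrix ((A × B) × Fin c) ((A × B) × Fin c) ℂ :=
  Matrix.of fun p q =>
    (if p.1.2 = q.1.2 then (1 : ℂ) else 0) * V (p.1.1, p.2) (q.1.1, q.2)

/-- Partial trace over the ancilla `C = Fin c`. -/
def trAncilla {n : Type*} {c : ℕ} (ρ : Matrix (n × Fin c) (n × Fin c) ℂ) :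
    Matrix n n ℂ :=
  Matrix.of fun i j => ∑ k, ρ (i, k) (j, k)

/-- Adjoining the pure ancilla state `|v⟩⟨v|` on `C = Fin c`: `ρ ⊗ |v⟩⟨v|`. -/
def withAncilla {n : Type*} {c : ℕ} (ρ : Matrix n n ℂ) (v : Fin c → ℂ) :
    Matrix (n × Fin c) (n × Fin c) ℂ :=
  Matrix.of fun p q => ρ p.1 q.1 * (v p.2 * star (v q.2))

/-! Write `⟨a|` for `⟨a| ⊗ 1 : ℂ^A ⊗ ℂ^B → ℂ^B`. States span all matrices, and Alice may replace her
system by a fixed pure state, so `Λ` is A↛B semicausal exactly when `Tr_A ∘ Λ = Φ ∘ Tr_A` for some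
channel `Φ` on `B`. If `K` and `T` are Kraus families of `Λ` and `Φ` with the same number of
operators, then both sides of this equation have Kraus families indexed by pairs `(a, k)`, namely
`⟨a| K k` and `T k ⟨a|`. Two Kraus families of the same size define the same map iff a unitary
matrix `V` carries one to the other, because then their vectorizations have equal Gram matrices.
Here this `V` is the unitary acting on `A` and `C`, while the unitary on `B` and `C` extends the
Stinespring isometry of `T`. -/

theorem exists_linearIsometryEquiv_apply_eq {𝕜 E F : Type*} [RCLike 𝕜] [AddCommGroup E]
    [Module 𝕜 E] [NormedAddCommGroup F] [InnerProductSpace 𝕜 F] [FiniteDimensional 𝕜 F]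
    {f g : E →ₗ[𝕜] F} (h : ∀ x, ‖f x‖ = ‖g x‖) : ∃ U : F ≃ₗᵢ[𝕜] F, ∀ x, f x = U (g x) := by
  have ker_le : LinearMap.ker g ≤ LinearMap.ker f := fun x hx => by
    rw [LinearMap.mem_ker, ← norm_eq_zero] at hx ⊢
    rw [h, hx]
  let φ : LinearMap.range g →ₗ[𝕜] F :=
    (LinearMap.ker g).liftQ f ker_le ∘ₗ g.quotKerEquivRange.symm.toLinearMap
  have φ_apply (x : E) : φ ⟨g x, LinearMap.mem_range_self g x⟩ = f x := by
    simp only [φ, LinearMap.comp_apply, LinearEquiv.coe_coe,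
      LinearMap.quotKerEquivRange_symm_apply_image, Submodule.mkQ_apply, Submodule.liftQ_apply]
  let L : LinearMap.range g →ₗᵢ[𝕜] F :=
    { φ with
      norm_map' := by
        rintro ⟨_, x, rfl⟩
        exact (congrArg norm (φ_apply x)).trans (h x) }
  refine ⟨L.extend.toLinearIsometryEquiv rfl, fun x => ?_⟩
  exact (φ_apply x).symm.trans (L.extend_apply ⟨g x, LinearMap.mem_range_self g x⟩).symm

section Gram

variable {𝕜 m n : Type*} [RCLike 𝕜] [Fintype m]

theorem norm_toEuclideanLin_sq [Fintype n] [DecidableEq n] (M : Matrix m n 𝕜)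
    (x : EuclideanSpace 𝕜 n) :
    ((‖toEuclideanLin M x‖ ^ 2 : ℝ) : 𝕜) = star x.ofLp ⬝ᵥ (Mᴴ * M) *ᵥ x.ofLp := by
  rw [RCLike.ofReal_pow, ← inner_self_eq_norm_sq_to_K, EuclideanSpace.inner_eq_star_dotProduct,
    toLpLin_apply, dotProduct_comm, star_mulVec, ← dotProduct_mulVec, mulVec_mulVec]

variable [DecidableEq m]

theorem exists_mem_unitaryGroup_mulVec_eq (U : EuclideanSpace 𝕜 m ≃ₗᵢ[𝕜] EuclideanSpace 𝕜 m) :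
    ∃ V ∈ unitaryGroup m 𝕜, ∀ x, (U x).ofLp = V *ᵥ x.ofLp := by
  let e := toEuclideanCLM (n := m) (𝕜 := 𝕜)
  let u := Unitary.linearIsometryEquiv.symm U
  refine ⟨e.symm u, Unitary.map_mem e.symm u.2, fun x => ?_⟩
  rw [← ofLp_toEuclideanCLM, StarAlgEquiv.apply_symm_apply]
  rfl

theorem conjTranspose_mul_self_eq_iff_exists_unitary [Finite n] {M N : Matrix m n 𝕜} :
    Mᴴ * M = Nᴴ * N ↔ ∃ V ∈ unitaryGroup m 𝕜, M = V * N := by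
  classical
  have := Fintype.ofFinite n
  constructor
  · intro h
    have norm_eq (x : EuclideanSpace 𝕜 n) : ‖toEuclideanLin M x‖ = ‖toEuclideanLin N x‖ := by
      rw [← sq_eq_sq₀ (norm_nonneg _) (norm_nonneg _), ← RCLike.ofReal_inj (K := 𝕜),
        norm_toEuclideanLin_sq, norm_toEuclideanLin_sq, h]
    obtain ⟨U, hU⟩ := exists_linearIsometryEquiv_apply_eq norm_eq
    obtain ⟨V, hV, hUV⟩ := exists_mem_unitaryGroup_mulVec_eq U
    refine ⟨V, hV, ext_of_mulVec_single fun i => ?_⟩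
    have := congrArg WithLp.ofLp (hU (EuclideanSpace.single i 1))
    simpa only [hUV, toLpLin_apply, mulVec_mulVec, PiLp.ofLp_single] using this
  · rintro ⟨V, hV, rfl⟩
    rw [conjTranspose_mul, Matrix.mul_assoc, ← Matrix.mul_assoc Vᴴ, ← star_eq_conjTranspose V,
      mem_unitaryGroup_iff'.1 hV, Matrix.one_mul]

end Gram

section Kraus

variable {R ι κ l m n : Type*} [CommSemiring R] [StarRing R] [Fintype ι] [Fintype κ]

/-- The completely positive map `X ↦ ∑ i, K i * X * (K i)ᴴ` with Kraus operators `K i`. -/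
def krausMap [Fintype n] (K : ι → Matrix m n R) : Matrix n n R →ₗ[R] Matrix m m R where
  toFun X := ∑ i, K i * X * (K i)ᴴ
  map_add' X Y := by simp only [Matrix.mul_add, Matrix.add_mul, Finset.sum_add_distrib]
  map_smul' r X := by
    simp only [Matrix.mul_smul, Matrix.smul_mul, Finset.smul_sum, RingHom.id_apply]

/-- Normalization of a Kraus family, equivalent to `krausMap K` preserving the trace. -/
def IsKrausNormalized [Fintype m] [DecidableEq n] (K : ι → Matrix m n R) : Prop :=
  ∑ i, (K i)ᴴ * K i = 1

theorem krausMap_apply [Fintype n] (K : ι → Matrix m n R) (X : Matrix n n R) :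
    krausMap K X = ∑ i, K i * X * (K i)ᴴ :=
  rfl

theorem krausMap_krausMap [Fintype m] [Fintype n] (L : ι → Matrix l m R) (K : κ → Matrix m n R)
    (X : Matrix n n R) :
    krausMap L (krausMap K X) = krausMap (fun p : ι × κ => L p.1 * K p.2) X := by
  simp only [krausMap_apply, Fintype.sum_prod_type, Matrix.mul_sum, Matrix.sum_mul,
    conjTranspose_mul, Matrix.mul_assoc]

theorem krausMap_comp_equiv [Fintype n] (K : ι → Matrix m n R) (e : κ ≃ ι) :
    krausMap (K ∘ e) = krausMap K :=
  LinearMap.ext fun X => e.sum_comp fun i => K i * X * (K i)ᴴ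

theorem krausMap_single_apply [Fintype n] [DecidableEq n] (K : ι → Matrix m n R) (q q' : n)
    (p p' : m) :
    krausMap K (single q q' 1) p p' = ∑ i, K i p q * star (K i p' q') := by
  simp only [krausMap_apply, Matrix.sum_apply]
  refine Finset.sum_congr rfl fun i _ => ?_
  rw [Matrix.mul_apply, Finset.sum_eq_single q' (fun j _ hj => by
    rw [mul_single_apply_of_ne _ _ _ _ _ hj, zero_mul]) (by simp)]
  simp

theorem IsKrausNormalized.comp [Fintype l] [Fintype m] [DecidableEq m] [DecidableEq n]
    {L : ι → Matrix l m R} {K : κ → Matrix m n R}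
    (hL : IsKrausNormalized L) (hK : IsKrausNormalized K) :
    IsKrausNormalized fun p : ι × κ => L p.1 * K p.2 := by
  calc ∑ p : ι × κ, (L p.1 * K p.2)ᴴ * (L p.1 * K p.2)
      = ∑ k, (K k)ᴴ * (∑ i, (L i)ᴴ * L i) * K k := by
        simp only [Fintype.sum_prod_type_right, conjTranspose_mul, Matrix.mul_sum, Matrix.sum_mul,
          Matrix.mul_assoc]
    _ = ∑ k, (K k)ᴴ * K k := by rw [hL]; simp only [Matrix.mul_one]
    _ = 1 := hK

theorem IsKrausNormalized.trace_krausMap [Fintype m] [Fintype n] [DecidableEq n]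
    {K : ι → Matrix m n R} (hK : IsKrausNormalized K) (X : Matrix n n R) :
    (krausMap K X).trace = X.trace := by
  calc (krausMap K X).trace = ((∑ i, (K i)ᴴ * K i) * X).trace := by
        rw [krausMap_apply, Matrix.sum_mul, trace_sum, trace_sum]
        exact Finset.sum_congr rfl fun i _ => by rw [trace_mul_comm, Matrix.mul_assoc]
    _ = X.trace := by rw [hK, Matrix.one_mul]

/-- The matrix whose rows are the vectorized Kraus operators. Its Gram matrix is the Choi matrix of
`krausMap K`, up to reindexing and complex conjugation. -/
def krausCoeff (K : ι → Matrix m n R) : Matrix ι (n × m) R :=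
  Matrix.of fun i => vec (K i)

theorem krausMap_eq_iff_gram_eq [Fintype n] {K L : ι → Matrix m n R} :
    krausMap K = krausMap L ↔
      (krausCoeff K)ᴴ * krausCoeff K = (krausCoeff L)ᴴ * krausCoeff L := by
  classical
  have gram_apply (K : ι → Matrix m n R) (q q' : n) (p p' : m) :
      ((krausCoeff K)ᴴ * krausCoeff K) (q', p') (q, p) = krausMap K (single q q' 1) p p' := by
    rw [krausMap_single_apply]
    exact Finset.sum_congr rfl fun i _ => mul_comm _ _
  constructor
  · intro h
    ext ⟨q', p'⟩ ⟨q, p⟩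
    rw [gram_apply, gram_apply, h]
  · intro h
    refine ext_linearMap R fun q q' => LinearMap.ext_ring ?_
    ext p p'
    exact (gram_apply K q q' p p').symm.trans (h ▸ gram_apply L q q' p p')

end Kraus

theorem krausCoeff_eq_mul_iff {R ι m n : Type*} [CommSemiring R] [Fintype ι]
    {K L : ι → Matrix m n R} {V : Matrix ι ι R} :
    krausCoeff K = V * krausCoeff L ↔ ∀ i, K i = ∑ j, V i j • L j := by
  simp only [← Matrix.ext_iff, Prod.forall, Matrix.sum_apply, Matrix.smul_apply, smul_eq_mul]
  exact forall_congr' fun i => forall_comm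

theorem krausMap_eq_iff_exists_unitary {𝕜 ι m n : Type*} [RCLike 𝕜] [Fintype ι] [DecidableEq ι]
    [Finite m] [Fintype n] {K L : ι → Matrix m n 𝕜} :
    krausMap K = krausMap L ↔ ∃ V ∈ unitaryGroup ι 𝕜, ∀ i, K i = ∑ j, V i j • L j := by
  simp only [krausMap_eq_iff_gram_eq, conjTranspose_mul_self_eq_iff_exists_unitary,
    krausCoeff_eq_mul_iff]

section Channel

variable {n : Type*} [Fintype n]

open scoped MatrixOrder Matrix.Norms.L2Operator in
theorem span_isState : Submodule.span ℂ {ρ : Matrix n n ℂ | IsState ρ} = ⊤ := by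
  classical
  rw [eq_top_iff, ← CStarAlgebra.span_nonneg (A := Matrix n n ℂ), Submodule.span_le]
  intro ρ hρ
  replace hρ : ρ.PosSemidef := nonneg_iff_posSemidef.1 hρ
  by_cases htr : ρ.trace = 0
  · rw [hρ.trace_eq_zero_iff.1 htr]
    exact zero_mem _
  · have hstate : IsState (ρ.trace⁻¹ • ρ) :=
      ⟨hρ.smul (inv_nonneg.2 hρ.trace_nonneg), by
        rw [trace_smul, smul_eq_mul, inv_mul_cancel₀ htr]⟩
    have := (Submodule.span ℂ {ρ : Matrix n n ℂ | IsState ρ}).smul_mem ρ.trace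
      (Submodule.subset_span hstate)
    rwa [smul_inv_smul₀ htr] at this

variable [DecidableEq n]

theorem isChannel_krausMap {ι : Type*} [Fintype ι] {K : ι → Matrix n n ℂ}
    (hK : IsKrausNormalized K) : IsChannel (krausMap K) := by
  let e := (Fintype.equivFin ι).symm
  exact ⟨Fintype.card ι, K ∘ e, fun X => by rw [← krausMap_comp_equiv K e, krausMap_apply],
    (e.sum_comp fun i => (K i)ᴴ * K i).trans hK⟩

theorem IsChannel.exists_kraus_of_le {Λ : Matrix n n ℂ → Matrix n n ℂ} (hΛ : IsChannel Λ) :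
    ∃ r, ∀ c, r ≤ c → ∃ K : Fin c → Matrix n n ℂ, Λ = krausMap K ∧ IsKrausNormalized K := by
  obtain ⟨r, K, hΛK, hK⟩ := hΛ
  refine ⟨r, fun c hc => ?_⟩
  obtain ⟨d, rfl⟩ := Nat.exists_eq_add_of_le hc
  refine ⟨Fin.append K 0, funext fun X => ?_, ?_⟩
  · simp [krausMap_apply, Fin.sum_univ_add, hΛK]
  · simpa [IsKrausNormalized, Fin.sum_univ_add] using hK

theorem IsChannel.trace_apply {Λ : Matrix n n ℂ → Matrix n n ℂ} (hΛ : IsChannel Λ)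
    (X : Matrix n n ℂ) : (Λ X).trace = X.trace := by
  obtain ⟨r, hr⟩ := hΛ.exists_kraus_of_le
  obtain ⟨K, rfl, hK⟩ := hr r le_rfl
  exact hK.trace_krausMap X

end Channel

section PartialTrace

variable {A B n : Type*} [DecidableEq A] [DecidableEq B]

/-- The operator `⟨a| ⊗ 1` from `A × B` to `B`; these are the Kraus operators of `trA`. -/
def braA (B : Type*) [DecidableEq B] (a : A) : Matrix B (A × B) ℂ :=
  (1 : Matrix (A × B) (A × B) ℂ).submatrix (Prod.mk a) id

variable [Fintype B]

theorem mul_braA_apply (a : A) (M : Matrix n B ℂ) (i : n) (p : A × B) :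
    (M * braA B a) i p = if a = p.1 then M i p.2 else 0 := by
  obtain ⟨a', b⟩ := p
  by_cases h : a = a' <;> simp [braA, Matrix.mul_apply, one_apply, h]

theorem conjTranspose_braA_mul_mul (a : A) (σ : Matrix B B ℂ) :
    (braA B a)ᴴ * σ * braA B a = single a a 1 ⊗ₖ σ := by
  have h : (braA B a)ᴴ * σ = (σᴴ * braA B a)ᴴ := by
    rw [conjTranspose_mul, conjTranspose_conjTranspose]
  ext ⟨x, b⟩ ⟨y, b'⟩
  simp only [mul_braA_apply, h, conjTranspose_apply, kronecker_apply, single_apply,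
    apply_ite star, star_star, star_zero, ite_mul, one_mul, zero_mul, and_comm (a := a = x),
    ite_and]

variable [Fintype A]

theorem braA_mul (a : A) (M : Matrix (A × B) n ℂ) : braA B a * M = M.submatrix (Prod.mk a) id :=
  one_submatrix_mul (Prod.mk a) (Equiv.refl _) M

theorem mul_conjTranspose_braA (a : A) (M : Matrix n (A × B) ℂ) :
    M * (braA B a)ᴴ = M.submatrix id (Prod.mk a) := by
  rw [braA, conjTranspose_submatrix, conjTranspose_one]
  exact mul_submatrix_one (Equiv.refl _) (Prod.mk a) M

theorem trA_eq_krausMap_braA (ρ : Matrix (A × B) (A × B) ℂ) : trA ρ = krausMap (braA B) ρ := by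
  ext b b'
  simp only [trA, krausMap_apply, braA_mul, mul_conjTranspose_braA, Matrix.sum_apply,
    submatrix_apply, of_apply, id]

theorem isKrausNormalized_braA : IsKrausNormalized (braA (A := A) B) := by
  calc ∑ a : A, (braA B a)ᴴ * braA B a = (1 : Matrix (A × B) (A × B) ℂ)ᴴ * 1 := by
        ext p q
        simp only [Matrix.sum_apply, Matrix.mul_apply, Fintype.sum_prod_type]
        rfl
    _ = 1 := by rw [conjTranspose_one, Matrix.one_mul]

theorem braA_mul_conjTranspose_self (a : A) : braA B a * (braA B a)ᴴ = 1 := by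
  rw [mul_conjTranspose_braA, braA, submatrix_submatrix]
  exact submatrix_one _ (Prod.mk_right_injective a)

theorem eq_iff_forall_braA_mul_eq {M N : Matrix (A × B) n ℂ} :
    M = N ↔ ∀ a : A, braA B a * M = braA B a * N := by
  simp only [braA_mul, ← Matrix.ext_iff, submatrix_apply, id_eq, Prod.forall]

end PartialTrace

section ReducedChannel

variable {A B : Type*} [Fintype A] [DecidableEq A]

theorem IsChannel.trA_tensIdA {Γ : Matrix A A ℂ → Matrix A A ℂ} (hΓ : IsChannel Γ)
    (ρ : Matrix (A × B) (A × B) ℂ) : trA (tensIdA Γ ρ) = trA ρ :=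
  Matrix.ext fun b b' => hΓ.trace_apply (Matrix.of fun a a' => ρ (a, b) (a', b'))

theorem isChannel_trace_smul_single (a₀ : A) :
    IsChannel fun X : Matrix A A ℂ => X.trace • single a₀ a₀ (1 : ℂ) := by
  have hK : IsKrausNormalized fun a : A => single a₀ a (1 : ℂ) := by
    simp [IsKrausNormalized, sum_single_one]
  convert isChannel_krausMap hK with X
  simp [krausMap_apply, single_mul_mul_single, trace, Finset.sum_smul, smul_single]

theorem tensIdA_trace_smul_single (a₀ : A) (ρ : Matrix (A × B) (A × B) ℂ) :
    tensIdA (fun X => X.trace • single a₀ a₀ (1 : ℂ)) ρ = single a₀ a₀ 1 ⊗ₖ trA ρ :=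
  Matrix.ext fun _ _ => mul_comm _ _

variable [Fintype B] {Λ : Matrix (A × B) (A × B) ℂ → Matrix (A × B) (A × B) ℂ}

theorem semicausalAtoB_of_trA_eq {Φ : Matrix B B ℂ → Matrix B B ℂ}
    (h : ∀ ρ, trA (Λ ρ) = Φ (trA ρ)) : SemicausalAtoB Λ := fun ρ _ Γ hΓ => by
  rw [h, h, hΓ.trA_tensIdA]

theorem SemicausalAtoB.exists_isChannel_trA_eq [DecidableEq B] [Nonempty A] (hΛ : IsChannel Λ)
    (h : SemicausalAtoB Λ) : ∃ Φ : Matrix B B ℂ → Matrix B B ℂ,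
      IsChannel Φ ∧ ∀ ρ, trA (Λ ρ) = Φ (trA ρ) := by
  obtain ⟨r, hr⟩ := hΛ.exists_kraus_of_le
  obtain ⟨K, rfl, hK⟩ := hr r le_rfl
  obtain ⟨a₀⟩ := ‹Nonempty A›
  let ket : Unit → Matrix (A × B) B ℂ := fun _ => (braA B a₀)ᴴ
  have ket_apply (σ : Matrix B B ℂ) : krausMap ket σ = single a₀ a₀ 1 ⊗ₖ σ := by
    rw [krausMap_apply, Fintype.sum_unique, conjTranspose_conjTranspose, conjTranspose_braA_mul_mul]
  have hket : IsKrausNormalized ket := by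
    rw [IsKrausNormalized, Fintype.sum_unique, conjTranspose_conjTranspose,
      braA_mul_conjTranspose_self]
  refine ⟨_, isChannel_krausMap ((isKrausNormalized_braA.comp hK).comp hket), fun ρ => ?_⟩
  have on_states : Set.EqOn (krausMap (braA B) ∘ₗ krausMap K)
      (krausMap (braA B) ∘ₗ krausMap K ∘ₗ krausMap ket ∘ₗ krausMap (braA B)) {ρ | IsState ρ} := by
    intro ρ hρ
    have hreplace := h ρ hρ _ (isChannel_trace_smul_single a₀)
    rw [tensIdA_trace_smul_single, ← ket_apply] at hreplace
    simpa only [LinearMap.comp_apply, ← trA_eq_krausMap_braA] using hreplace.symm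
  calc trA (krausMap K ρ) = krausMap (braA B) (krausMap K (krausMap ket (trA ρ))) := by
        rw [trA_eq_krausMap_braA, trA_eq_krausMap_braA]
        exact LinearMap.congr_fun (LinearMap.ext_on span_isState on_states) ρ
    _ = _ := by rw [krausMap_krausMap, krausMap_krausMap]

end ReducedChannel

section Semilocal

variable {A B ι : Type*} [Fintype A] [Fintype B] [DecidableEq A] [Fintype ι]

/-- The operators `∑ j, ⟨k|V|j⟩ ⊗ T j` obtained when the Kraus family `T` acts on `B`, writes its
outcome to an ancilla, and `V` then acts on `A` and the ancilla. -/
def semilocalKraus (V : Matrix (A × ι) (A × ι) ℂ) (T : ι → Matrix B B ℂ) (k : ι) :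
    Matrix (A × B) (A × B) ℂ :=
  ∑ j, V.submatrix (·, k) (·, j) ⊗ₖ T j

theorem braA_mul_semilocalKraus [DecidableEq B]
    (V : Matrix (A × ι) (A × ι) ℂ) (T : ι → Matrix B B ℂ) (a : A) (k : ι) :
    braA B a * semilocalKraus V T k = ∑ q : A × ι, V (a, k) q • (T q.2 * braA B q.1) := by
  ext b p
  simp [semilocalKraus, braA_mul, Matrix.sum_apply, mul_braA_apply, Fintype.sum_prod_type_right]

theorem trA_krausMap_eq_iff [DecidableEq ι] {K : ι → Matrix (A × B) (A × B) ℂ}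
    {T : ι → Matrix B B ℂ} :
    (∀ ρ, trA (krausMap K ρ) = krausMap T (trA ρ)) ↔
      ∃ V ∈ unitaryGroup (A × ι) ℂ, K = semilocalKraus V T := by
  classical
  have trA_comp (ρ : Matrix (A × B) (A × B) ℂ) :
      trA (krausMap K ρ) = krausMap (fun p : A × ι => braA B p.1 * K p.2) ρ := by
    rw [trA_eq_krausMap_braA, krausMap_krausMap]
  have comp_trA (ρ : Matrix (A × B) (A × B) ℂ) :
      krausMap T (trA ρ) = krausMap (fun p : A × ι => T p.2 * braA B p.1) ρ := by
    rw [trA_eq_krausMap_braA, krausMap_krausMap, ← krausMap_comp_equiv _ (Equiv.prodComm A ι)]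
    rfl
  simp only [trA_comp, comp_trA, ← LinearMap.ext_iff, krausMap_eq_iff_exists_unitary, Prod.forall,
    ← braA_mul_semilocalKraus]
  refine exists_congr fun V => and_congr_right fun _ => ?_
  rw [forall_comm, funext_iff]
  exact forall_congr' fun k => eq_iff_forall_braA_mul_eq.symm

end Semilocal

section Dilation

variable {R ι m n : Type*}

/-- The Stinespring dilation `∑ i, K i ⊗ |i⟩` of a Kraus family. -/
def stinespring (K : ι → Matrix m n R) : Matrix (m × ι) n R :=
  Matrix.of fun p q => K p.2 p.1 q

theorem stinespring_surjective :
    Function.Surjective (stinespring : (ι → Matrix m n R) → Matrix (m × ι) n R) :=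
  fun S => ⟨fun i => S.submatrix (·, i) id, rfl⟩

variable [Fintype ι]

theorem conjTranspose_stinespring_mul_self [CommSemiring R] [StarRing R] [Fintype m]
    (K : ι → Matrix m n R) : (stinespring K)ᴴ * stinespring K = ∑ i, (K i)ᴴ * K i := by
  ext
  simp [stinespring, Matrix.mul_apply, Matrix.sum_apply, Fintype.sum_prod_type_right]

theorem exists_unitary_mul_stinespring_eq {𝕜 : Type*} [RCLike 𝕜] [Fintype m] [Finite n]
    [DecidableEq ι] [DecidableEq m] [DecidableEq n] {K L : ι → Matrix m n 𝕜}
    (hK : IsKrausNormalized K) (hL : IsKrausNormalized L) :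
    ∃ W ∈ unitaryGroup (m × ι) 𝕜, W * stinespring K = stinespring L := by
  have gram_eq : (stinespring L)ᴴ * stinespring L = (stinespring K)ᴴ * stinespring K := by
    rw [conjTranspose_stinespring_mul_self, conjTranspose_stinespring_mul_self]
    exact hL.trans hK.symm
  obtain ⟨W, hW, h⟩ := conjTranspose_mul_self_eq_iff_exists_unitary.1 gram_eq
  exact ⟨W, hW, h.symm⟩

theorem isKrausNormalized_smul_one [CommSemiring R] [StarRing R] [Fintype n] [DecidableEq n]
    {v : ι → R} (hv : ∑ i, star (v i) * v i = 1) :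
    IsKrausNormalized fun i => v i • (1 : Matrix n n R) := by
  simp [IsKrausNormalized, smul_smul, ← Finset.sum_smul, mul_comm (v _), hv]

end Dilation

section Circuit

variable {A B l n : Type*} {c : ℕ}

theorem trAncilla_stinespring_mul_mul [Fintype n] (K : Fin c → Matrix l n ℂ) (ρ : Matrix n n ℂ) :
    trAncilla (stinespring K * ρ * (stinespring K)ᴴ) = krausMap K ρ := by
  ext
  simp [trAncilla, stinespring, krausMap_apply, Matrix.mul_apply, Matrix.sum_apply]

theorem withAncilla_eq_stinespring_mul_mul [Fintype n] [DecidableEq n]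
    (ρ : Matrix n n ℂ) (v : Fin c → ℂ) :
    withAncilla ρ v = stinespring (fun k => v k • (1 : Matrix n n ℂ)) * ρ *
      (stinespring fun k => v k • (1 : Matrix n n ℂ))ᴴ := by
  ext p q
  simp [withAncilla, stinespring, Matrix.mul_apply, one_apply, apply_ite star, mul_assoc,
    mul_left_comm (v _)]

variable [Fintype A] [Fintype B] [DecidableEq A]

theorem liftBC_mul_stinespring {W : Matrix (B × Fin c) (B × Fin c) ℂ} {T T' : Fin c → Matrix B n ℂ}
    (h : W * stinespring T = stinespring T') (X : Matrix A l ℂ) :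
    liftBC (A := A) W * stinespring (fun k => X ⊗ₖ T k) = stinespring fun k => X ⊗ₖ T' k := by
  ext ⟨⟨a, b⟩, k⟩ ⟨a', b'⟩
  calc (liftBC (A := A) W * stinespring fun k => X ⊗ₖ T k) ((a, b), k) (a', b')
      = X a a' * (W * stinespring T) (b, k) b' := by
        simp only [Matrix.mul_apply, Fintype.sum_prod_type, liftBC, stinespring, of_apply,
          kronecker_apply]
        rw [Finset.sum_eq_single a (fun x _ hx => by simp [hx.symm]) (by simp)]
        simp [Finset.mul_sum, mul_left_comm]
    _ = X a a' * T' k b b' := by rw [h]; rfl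

variable [DecidableEq B]

theorem liftAC_mul_stinespring (V : Matrix (A × Fin c) (A × Fin c) ℂ) (T : Fin c → Matrix B B ℂ) :
    liftAC (B := B) V * stinespring (fun k => (1 : Matrix A A ℂ) ⊗ₖ T k) =
      stinespring (semilocalKraus V T) := by
  ext ⟨⟨a, b⟩, k⟩ ⟨a', b'⟩
  simp only [Matrix.mul_apply, Fintype.sum_prod_type_right, liftAC, stinespring, of_apply,
    kronecker_apply, semilocalKraus, Matrix.sum_apply, submatrix_apply]
  refine Finset.sum_congr rfl fun j _ => ?_
  rw [Finset.sum_eq_single b (fun y _ hy => by simp [hy.symm]) (by simp)]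
  simp [one_apply]

theorem trAncilla_circuit_eq_krausMap {W : Matrix (B × Fin c) (B × Fin c) ℂ} {v : Fin c → ℂ}
    {T : Fin c → Matrix B B ℂ}
    (hWT : W * stinespring (fun k => v k • (1 : Matrix B B ℂ)) = stinespring T)
    (V : Matrix (A × Fin c) (A × Fin c) ℂ) (ρ : Matrix (A × B) (A × B) ℂ) :
    trAncilla (liftAC V * liftBC W * withAncilla ρ v * (liftBC W)ᴴ * (liftAC V)ᴴ) =
      krausMap (semilocalKraus V T) ρ := by
  have dilation : liftAC (B := B) V *
      (liftBC (A := A) W * stinespring fun k => v k • (1 : Matrix (A × B) (A × B) ℂ))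
      = stinespring (semilocalKraus V T) := by
    rw [← liftAC_mul_stinespring, ← liftBC_mul_stinespring hWT]
    simp only [kronecker_smul, one_kronecker_one]
  rw [← trAncilla_stinespring_mul_mul, ← dilation, withAncilla_eq_stinespring_mul_mul]
  simp only [conjTranspose_mul, Matrix.mul_assoc]

end Circuit

/-- a channel is A↛B semicausal iff it is semilocalizable with
communication from B to A:
`Λ[ρ] = Tr_C[ U_AC U_BC (ρ ⊗ |0_C⟩⟨0_C|) U_BC† U_AC† ]` for some finite nonempty
ancilla `C`, unit vector `|0_C⟩`, and unitaries `U_BC`, `U_AC` acting on the indicated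
factors. -/
theorem stmt_10 {A B : Type*} [Fintype A] [Fintype B] [DecidableEq A] [DecidableEq B]
    [Nonempty A] [Nonempty B]
    (Λ : Matrix (A × B) (A × B) ℂ → Matrix (A × B) (A × B) ℂ) (hΛ : IsChannel Λ) :
    SemicausalAtoB Λ ↔
      ∃ c : ℕ, 0 < c ∧
        ∃ v : Fin c → ℂ, (∑ k, star (v k) * v k = 1) ∧
          ∃ W ∈ Matrix.unitaryGroup (B × Fin c) ℂ,
            ∃ V ∈ Matrix.unitaryGroup (A × Fin c) ℂ,
              ∀ ρ : Matrix (A × B) (A × B) ℂ,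
                Λ ρ = trAncilla
                  (liftAC V * liftBC W * withAncilla ρ v
                    * (liftBC W)ᴴ * (liftAC V)ᴴ) := by
  constructor
  · intro hsc
    obtain ⟨Φ, hΦ, hΛΦ⟩ := hsc.exists_isChannel_trA_eq hΛ
    obtain ⟨r, hr⟩ := hΛ.exists_kraus_of_le
    obtain ⟨s, hs⟩ := hΦ.exists_kraus_of_le
    let c := r + s + 1
    obtain ⟨K, rfl, -⟩ := hr c (by omega)
    obtain ⟨T, rfl, hT⟩ := hs c (by omega)
    obtain ⟨V, hV, rfl⟩ := trA_krausMap_eq_iff.1 hΛΦ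
    let v : Fin c → ℂ := Pi.single 0 1
    have hv : ∑ k, star (v k) * v k = 1 := by simp [v, Pi.single_apply]
    obtain ⟨W, hW, hWT⟩ := exists_unitary_mul_stinespring_eq (isKrausNormalized_smul_one hv) hT
    exact ⟨c, Nat.succ_pos _, v, hv, W, hW, V, hV,
      fun ρ => (trAncilla_circuit_eq_krausMap hWT V ρ).symm⟩
  · rintro ⟨c, -, v, -, W, -, V, hV, hΛV⟩
    obtain ⟨T, hT⟩ := stinespring_surjective (W * stinespring fun k => v k • (1 : Matrix B B ℂ))
    refine semicausalAtoB_of_trA_eq (Φ := krausMap T) fun ρ => ?_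
    rw [hΛV, trAncilla_circuit_eq_krausMap hT.symm]
    exact trA_krausMap_eq_iff.2 ⟨V, hV, rfl⟩ ρ
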